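/- For all integers m, n ≥ 1 with (m,n) ≠ (2,1), χ_la(P_{2m} ∨ O_{2n−1}) = 3; in the exceptional case, χ_la(P_4 ∨ O_1) = 4. -/

import Mathlib

open Finset SimpleGraph
open scoped Classical

/-- The induced vertex label (weight) of `x`: the sum of `f` over all edges incident to `x`. -/
noncomputable def vertexWeight {V : Type*} [Fintype V] (G : SimpleGraph V)
    (f : Sym2 V → ℕ) (x : V) : ℕ :=
  ∑ e ∈ G.edgeFinset.filter (fun e => x ∈ e), f e

/-- `f` is a local antimagic labeling of `G`: it restricts to a bijection from the edge set of
`G` onto `{1, …, q}` (where `q` is the number of edges), and adjacent vertices get distinct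
induced vertex labels. -/
def IsLocalAntimagic {V : Type*} [Fintype V] (G : SimpleGraph V) (f : Sym2 V → ℕ) : Prop :=
  Set.BijOn f G.edgeSet (Set.Icc 1 G.edgeSet.ncard) ∧
  ∀ ⦃x y : V⦄, G.Adj x y → vertexWeight G f x ≠ vertexWeight G f y

/-- The number of distinct induced vertex labels, `c(f)`. -/
noncomputable def colorCount {V : Type*} [Fintype V] (G : SimpleGraph V)
    (f : Sym2 V → ℕ) : ℕ :=
  (Finset.univ.image (vertexWeight G f)).card

/-- The local antimagic chromatic number `χ_la(G)`. -/
noncomputable def chiLA {V : Type*} [Fintype V] (G : SimpleGraph V) : ℕ :=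
  sInf { n | ∃ f : Sym2 V → ℕ, IsLocalAntimagic G f ∧ colorCount G f = n }

/-- The join `G ∨ H` of two vertex-disjoint graphs. -/
def joinG {α β : Type*} (G : SimpleGraph α) (H : SimpleGraph β) : SimpleGraph (α ⊕ β) :=
  SimpleGraph.fromRel (fun x y =>
    (∃ a b, x = Sum.inl a ∧ y = Sum.inl b ∧ G.Adj a b) ∨
    (∃ a b, x = Sum.inr a ∧ y = Sum.inr b ∧ H.Adj a b) ∨
    (∃ a b, x = Sum.inl a ∧ y = Sum.inr b))

/-!
Two adjacent vertices of the path and a vertex of `O_k` form a triangle, so at least three weights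
occur. For the converse, the spokes of `P_{2m} ∨ O_k` are labeled by an array with `2m` rows and `k`
columns such that all columns have the same sum, and the rows have, together with the adjacent
edges of the path, two alternating sums.

For odd `k ≥ 3` the path gets the smallest labels, alternately increasing and decreasing, and each
column a block of `2m` labels symmetric about the common center `H - 1/2`. Pairing each label with
its mirror image balances the columns, and the rows are balanced by suitable orders of the first
three columns, the remaining columns cancelling in pairs. For `k = 1` the labels of the spokes are
determined by those of the path and by the two weights, and it remains to choose these such that no
label is used twice.

For `P_4 ∨ O_1`, three weights would force the first and third and also the second and fourth vertex
of the path to have equal weights. A finite check of the labels then shows that all four are equal.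
-/

section LocalAntimagic

variable {V : Type*} [Fintype V] {G : SimpleGraph V} {f : Sym2 V → ℕ}

theorem vertexWeight_eq_sum_ite (G : SimpleGraph V) (f : Sym2 V → ℕ) (x : V) :
    vertexWeight G f x = ∑ y, if G.Adj x y then f s(x, y) else 0 := by
  have himage : G.edgeFinset.filter (fun e => x ∈ e) =
      (univ.filter fun y => G.Adj x y).image fun y => s(x, y) := by
    ext e
    simp only [mem_filter, mem_edgeFinset, mem_image, mem_univ, true_and]
    constructor
    · rintro ⟨he, y, rfl⟩
      exact ⟨y, he, rfl⟩
    · rintro ⟨y, hy, rfl⟩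
      exact ⟨hy, Sym2.mem_mk_left x y⟩
  rw [vertexWeight, himage, sum_image fun y _ z _ h => Sym2.congr_right.1 h, sum_filter]

theorem card_le_colorCount_of_injOn {s : Finset V} (hs : Set.InjOn (vertexWeight G f) s) :
    s.card ≤ colorCount G f := by
  rw [← card_image_of_injOn hs]
  exact card_le_card (image_subset_image (subset_univ s))

theorem colorCount_le_card {t : Finset ℕ} (ht : ∀ x, vertexWeight G f x ∈ t) :
    colorCount G f ≤ t.card :=
  card_le_card (image_subset_iff.2 fun x _ => ht x)

theorem IsLocalAntimagic.card_le_colorCount {n : ℕ} {s : Finset V} (hf : IsLocalAntimagic G f)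
    (hs : G.IsNClique n s) : n ≤ colorCount G f := by
  rw [← hs.card_eq]
  refine card_le_colorCount_of_injOn fun x hx y hy hxy => ?_
  by_contra hne
  exact hf.2 (hs.isClique hx hy hne) hxy

theorem chiLA_eq_of_colorCount_le {n : ℕ} (hf : IsLocalAntimagic G f) (hle : colorCount G f ≤ n)
    (hge : ∀ g, IsLocalAntimagic G g → n ≤ colorCount G g) : chiLA G = n := by
  refine le_antisymm (le_trans (Nat.sInf_le ⟨f, hf, rfl⟩) hle) (le_csInf ?_ ?_)
  · exact ⟨_, f, hf, rfl⟩
  · rintro _ ⟨g, hg, rfl⟩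
    exact hge g hg

end LocalAntimagic

theorem bijOn_Icc_ncard_of_injOn {ι : Type*} {f : ι → ℕ} {E : Set ι} (hinj : Set.InjOn f E)
    (hmaps : Set.MapsTo f E (Set.Icc 1 E.ncard)) : Set.BijOn f E (Set.Icc 1 E.ncard) := by
  refine ⟨hmaps, hinj, (Set.eq_of_subset_of_ncard_le hmaps.image_subset ?_).ge⟩
  simp [hinj.ncard_image, Set.ncard_eq_toFinset_card']

section Join

variable {α β : Type*} {G : SimpleGraph α} {H : SimpleGraph β}

@[simp]
theorem joinG_adj_inl_inl {a b : α} : (joinG G H).Adj (.inl a) (.inl b) ↔ G.Adj a b := by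
  simpa [joinG, G.adj_comm b a] using fun h : G.Adj a b => h.ne

@[simp]
theorem joinG_adj_inr_inr {a b : β} : (joinG G H).Adj (.inr a) (.inr b) ↔ H.Adj a b := by
  simpa [joinG, H.adj_comm b a] using fun h : H.Adj a b => h.ne

@[simp]
theorem joinG_adj_inl_inr {a : α} {b : β} : (joinG G H).Adj (.inl a) (.inr b) := by
  simp [joinG]

@[simp]
theorem joinG_adj_inr_inl {a : α} {b : β} : (joinG G H).Adj (.inr b) (.inl a) :=
  joinG_adj_inl_inr.symm

theorem isNClique_joinG {a b : α} (hab : G.Adj a b) (c : β) :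
    (joinG G H).IsNClique 3 {.inl a, .inl b, .inr c} := by
  simp [is3Clique_triple_iff, hab]

/-- The spoke of the join `G ∨ H` with the given endpoints in `G` and in `H`. -/
def spoke (p : α × β) : Sym2 (α ⊕ β) := s(.inl p.1, .inr p.2)

theorem spoke_injective : Function.Injective (spoke : α × β → Sym2 (α ⊕ β)) := by
  rintro ⟨a, b⟩ ⟨a', b'⟩ h
  simpa [spoke] using h

theorem edgeSet_joinG_bot : (joinG G (⊥ : SimpleGraph β)).edgeSet =
    Sym2.map Sum.inl '' G.edgeSet ∪ Set.range spoke := by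
  ext e
  constructor
  · induction e with | _ x y
    intro h
    rcases x with a | c <;> rcases y with b | d
    · exact .inl ⟨s(a, b), joinG_adj_inl_inl.1 h, rfl⟩
    · exact .inr ⟨(a, d), rfl⟩
    · exact .inr ⟨(b, c), Sym2.eq_swap⟩
    · exact (joinG_adj_inr_inr.1 h).elim
  · rintro (⟨e, he, rfl⟩ | ⟨p, rfl⟩)
    · induction e with | _ a b
      exact joinG_adj_inl_inl.2 he
    · exact joinG_adj_inl_inr

theorem disjoint_map_inl_range_spoke (E : Set (Sym2 α)) :
    Disjoint (Sym2.map Sum.inl '' E) (Set.range (spoke : α × β → Sym2 (α ⊕ β))) := by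
  rw [Set.disjoint_left]
  rintro _ ⟨e, -, rfl⟩ ⟨p, hp⟩
  induction e with | _ a b
  simp [spoke] at hp

variable [Fintype α] [Fintype β]

theorem ncard_edgeSet_joinG_bot : (joinG G (⊥ : SimpleGraph β)).edgeSet.ncard =
    G.edgeSet.ncard + Fintype.card α * Fintype.card β := by
  rw [edgeSet_joinG_bot, Set.ncard_union_eq (disjoint_map_inl_range_spoke _),
    Set.ncard_image_of_injective _ (Sym2.map.injective Sum.inl_injective), ← Set.image_univ,
    Set.ncard_image_of_injective _ spoke_injective, Set.ncard_univ, Nat.card_eq_fintype_card,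
    Fintype.card_prod]

theorem vertexWeight_joinG_inl (f : Sym2 (α ⊕ β) → ℕ) (a : α) :
    vertexWeight (joinG G H) f (.inl a) =
      vertexWeight G (f ∘ Sym2.map Sum.inl) a + ∑ b, f (spoke (a, b)) := by
  simp [vertexWeight_eq_sum_ite, spoke]

theorem vertexWeight_joinG_bot_inr (f : Sym2 (α ⊕ β) → ℕ) (b : β) :
    vertexWeight (joinG G (⊥ : SimpleGraph β)) f (.inr b) = ∑ a, f (spoke (a, b)) := by
  simp [vertexWeight_eq_sum_ite, spoke, Sym2.eq_swap]

theorem IsLocalAntimagic.four_le_colorCount_joinG {f : Sym2 (α ⊕ β) → ℕ} {a b c : α} {d : β}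
    (hf : IsLocalAntimagic (joinG G H) f) (hab : G.Adj a b) (hbc : G.Adj b c)
    (hac : vertexWeight (joinG G H) f (.inl a) ≠ vertexWeight (joinG G H) f (.inl c)) :
    4 ≤ colorCount (joinG G H) f := by
  have wab := hf.2 (joinG_adj_inl_inl.2 hab)
  have wbc := hf.2 (joinG_adj_inl_inl.2 hbc)
  have wd (x : α) := hf.2 (x := .inl x) (y := .inr d) joinG_adj_inl_inr
  let s : Finset (α ⊕ β) := {.inl a, .inl b, .inl c, .inr d}
  have hs : s.card = 4 := by
    have : a ≠ c := fun h => hac (h ▸ rfl)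
    simp [s, hab.ne, hbc.ne, this]
  refine hs.ge.trans (card_le_colorCount_of_injOn ?_)
  simp only [Set.InjOn, s]
  grind

end Join

section Path

variable {K : ℕ}

theorem bijOn_sup_edgeSet_pathGraph :
    Set.BijOn (fun z : Sym2 (Fin K) => (z.sup : ℕ)) (pathGraph K).edgeSet (Set.Ioo 0 K) := by
  refine ⟨?_, ?_, ?_⟩
  · intro z hz
    induction z with | _ i j
    rw [mem_edgeSet, pathGraph_adj] at hz
    simp only [Sym2.sup_mk, Fin.coe_max, Set.mem_Ioo]
    omega
  · intro z hz z' hz' h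
    induction z with | _ i j
    induction z' with | _ i' j'
    rw [mem_edgeSet, pathGraph_adj] at hz hz'
    simp only [Sym2.sup_mk, Fin.coe_max] at h
    rw [Sym2.eq_iff]
    omega
  · rintro j ⟨hpos, hlt⟩
    refine ⟨s(⟨j - 1, by omega⟩, ⟨j, hlt⟩), ?_, ?_⟩
    · rw [mem_edgeSet, pathGraph_adj]
      exact .inl (Nat.sub_add_cancel hpos)
    · simp

theorem ncard_edgeSet_pathGraph : (pathGraph K).edgeSet.ncard = K - 1 := by
  rw [← bijOn_sup_edgeSet_pathGraph.injOn.ncard_image, bijOn_sup_edgeSet_pathGraph.image_eq]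
  simp [Set.ncard_eq_toFinset_card']

theorem vertexWeight_pathGraph {e : ℕ → ℕ} (h₀ : e 0 = 0) (hK : e K = 0) (i : Fin K) :
    vertexWeight (pathGraph K) (fun z => e z.sup) i = e i + e (i + 1) := by
  have hsplit (j : Fin K) : (if (pathGraph K).Adj i j then e s(i, j).sup else 0) =
      (if (j : ℕ) + 1 = i then e i else 0) + if (i : ℕ) + 1 = j then e (i + 1) else 0 := by
    simp only [pathGraph_adj, Sym2.sup_mk, Fin.coe_max]
    grind
  have hleft : ∑ j : Fin K, (if (j : ℕ) + 1 = i then e i else 0) = e i := by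
    obtain hi | hi := Nat.eq_zero_or_pos i
    · simp [hi, h₀]
    · rw [sum_eq_single ⟨i - 1, by omega⟩] <;> grind
  have hright : ∑ j : Fin K, (if (i : ℕ) + 1 = j then e (i + 1) else 0) = e (i + 1) := by
    obtain hi | hi := Nat.lt_or_ge (i + 1) K
    · rw [sum_eq_single ⟨i + 1, hi⟩] <;> grind
    · simp [show (i : ℕ) + 1 = K by omega, hK]
  rw [vertexWeight_eq_sum_ite, sum_congr rfl fun j _ => hsplit j, sum_add_distrib, hleft, hright]

end Path

/-- The graph `P_K ∨ O_k`. -/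
abbrev pathJoinNull (K k : ℕ) : SimpleGraph (Fin K ⊕ Fin k) :=
  joinG (pathGraph K) ⊥

/-- The labels of the edges of `P_K ∨ O_k`, arranged in an array: `e i` is the label of the `i`-th
edge of the path, which joins the `i - 1`-st to the `i`-th vertex (vertices being counted from `0`),
and `s i c` is the label of the edge from the `i`-th vertex of the path to the `c`-th vertex of
`O_k`. The labels are integers so that they can be subtracted, and `e` vanishes at `0` and `K` in
order that `e i + e (i + 1)` be the contribution of the path to the weight of its `i`-th vertex
also at the two ends. -/
structure IsLabelArray (K k : ℕ) (e : ℕ → ℤ) (s : ℕ → ℕ → ℤ) : Prop where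
  path_zero : e 0 = 0
  path_last : e K = 0
  path_mem : ∀ i, 0 < i → i < K → 1 ≤ e i ∧ e i ≤ K - 1 + K * k
  spoke_mem : ∀ i c, i < K → c < k → 1 ≤ s i c ∧ s i c ≤ K - 1 + K * k
  path_inj : ∀ i j, 0 < i → i < K → 0 < j → j < K → e i = e j → i = j
  spoke_inj : ∀ i c j d, i < K → c < k → j < K → d < k → s i c = s j d → i = j ∧ c = d
  path_ne_spoke : ∀ i j c, 0 < i → i < K → j < K → c < k → e i ≠ s j c

/-- The weight of the `i`-th vertex of the path in an array of labels of `P_K ∨ O_k`. -/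
def rowWeight (k : ℕ) (e : ℕ → ℤ) (s : ℕ → ℕ → ℤ) (i : ℕ) : ℤ :=
  e i + e (i + 1) + ∑ c ∈ range k, s i c

/-- The weight of the `c`-th vertex of `O_k` in an array of labels of `P_K ∨ O_k`. -/
def colWeight (K : ℕ) (s : ℕ → ℕ → ℤ) (c : ℕ) : ℤ :=
  ∑ i ∈ range K, s i c

/-- The labeling of `P_K ∨ O_k` given by an array of labels; it is zero at the pairs of vertices of
`O_k`, which are not edges. -/
def arrayLabeling (K k : ℕ) (e : ℕ → ℤ) (s : ℕ → ℕ → ℤ) : Sym2 (Fin K ⊕ Fin k) → ℕ :=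
  Sym2.lift ⟨fun
    | .inl i, .inl j => (e (max i j : Fin K)).toNat
    | .inl i, .inr c => (s i c).toNat
    | .inr c, .inl i => (s i c).toNat
    | .inr _, .inr _ => 0, by
    rintro (i | c) (j | d) <;> simp only [max_comm]⟩

section LabelArray

variable {K k : ℕ} {e : ℕ → ℤ} {s : ℕ → ℕ → ℤ}

theorem arrayLabeling_map_inl (z : Sym2 (Fin K)) :
    arrayLabeling K k e s (z.map .inl) = (e z.sup).toNat := by
  induction z with | _ i j
  rfl

theorem arrayLabeling_spoke (i : Fin K) (c : Fin k) :
    arrayLabeling K k e s (spoke (i, c)) = (s i c).toNat := rfl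

namespace IsLabelArray

theorem injOn (h : IsLabelArray K k e s) :
    Set.InjOn (arrayLabeling K k e s) (pathJoinNull K k).edgeSet := by
  have hsup {z : Sym2 (Fin K)} (hz : z ∈ (pathGraph K).edgeSet) : 0 < (z.sup : ℕ) :=
    (bijOn_sup_edgeSet_pathGraph.mapsTo hz).1
  rw [edgeSet_joinG_bot, Set.injOn_union (disjoint_map_inl_range_spoke _)]
  refine ⟨?_, ?_, ?_⟩
  · rintro _ ⟨z, hz, rfl⟩ _ ⟨z', hz', rfl⟩ heq
    rw [arrayLabeling_map_inl, arrayLabeling_map_inl] at heq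
    have := h.path_mem _ (hsup hz) z.sup.isLt
    have := h.path_mem _ (hsup hz') z'.sup.isLt
    rw [bijOn_sup_edgeSet_pathGraph.injOn hz hz' <|
      h.path_inj _ _ (hsup hz) z.sup.isLt (hsup hz') z'.sup.isLt (by omega)]
  · rintro _ ⟨⟨i, c⟩, rfl⟩ _ ⟨⟨j, d⟩, rfl⟩ heq
    rw [arrayLabeling_spoke, arrayLabeling_spoke] at heq
    have := h.spoke_mem i c i.isLt c.isLt
    have := h.spoke_mem j d j.isLt d.isLt
    obtain ⟨hij, hcd⟩ := h.spoke_inj i c j d i.isLt c.isLt j.isLt d.isLt (by omega)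
    rw [Fin.ext hij, Fin.ext hcd]
  · rintro _ ⟨z, hz, rfl⟩ _ ⟨⟨i, c⟩, rfl⟩ heq
    rw [arrayLabeling_map_inl, arrayLabeling_spoke] at heq
    have := h.path_mem _ (hsup hz) z.sup.isLt
    have := h.spoke_mem i c i.isLt c.isLt
    exact h.path_ne_spoke _ i c (hsup hz) z.sup.isLt i.isLt c.isLt (by omega)

theorem mapsTo (h : IsLabelArray K k e s) :
    Set.MapsTo (arrayLabeling K k e s) (pathJoinNull K k).edgeSet
      (Set.Icc 1 (pathJoinNull K k).edgeSet.ncard) := by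
  rw [ncard_edgeSet_joinG_bot, ncard_edgeSet_pathGraph, Fintype.card_fin, Fintype.card_fin,
    edgeSet_joinG_bot]
  rintro _ (⟨z, hz, rfl⟩ | ⟨⟨i, c⟩, rfl⟩)
  · rw [arrayLabeling_map_inl, Set.mem_Icc]
    have := h.path_mem _ (bijOn_sup_edgeSet_pathGraph.mapsTo hz).1 z.sup.isLt
    omega
  · rw [arrayLabeling_spoke, Set.mem_Icc]
    have := h.spoke_mem i c i.isLt c.isLt
    omega

theorem path_nonneg (h : IsLabelArray K k e s) {i : ℕ} (hi : i ≤ K) : 0 ≤ e i := by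
  rcases Nat.eq_zero_or_pos i with rfl | hpos
  · exact h.path_zero.ge
  · rcases hi.eq_or_lt with rfl | hlt
    · exact h.path_last.ge
    · exact zero_le_one.trans (h.path_mem i hpos hlt).1

theorem spoke_nonneg (h : IsLabelArray K k e s) {i c : ℕ} (hi : i < K) (hc : c < k) : 0 ≤ s i c :=
  zero_le_one.trans (h.spoke_mem i c hi hc).1

theorem vertexWeight_inl (h : IsLabelArray K k e s) (i : Fin K) :
    (vertexWeight (pathJoinNull K k) (arrayLabeling K k e s) (.inl i) : ℤ) = rowWeight k e s i := by
  have hcomp : arrayLabeling K k e s ∘ Sym2.map Sum.inl = fun z => (e z.sup).toNat :=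
    funext arrayLabeling_map_inl
  rw [vertexWeight_joinG_inl, hcomp,
    vertexWeight_pathGraph (e := fun j => (e j).toNat) (by simp [h.path_zero])
      (by simp [h.path_last]), rowWeight, ← Fin.sum_univ_eq_sum_range]
  push_cast
  rw [Int.toNat_of_nonneg (h.path_nonneg i.isLt.le), Int.toNat_of_nonneg (h.path_nonneg i.isLt)]
  congr 1
  exact sum_congr rfl fun c _ => Int.toNat_of_nonneg (h.spoke_nonneg i.isLt c.isLt)

theorem vertexWeight_inr (h : IsLabelArray K k e s) (c : Fin k) :
    (vertexWeight (pathJoinNull K k) (arrayLabeling K k e s) (.inr c) : ℤ) = colWeight K s c := by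
  rw [vertexWeight_joinG_bot_inr, colWeight, ← Fin.sum_univ_eq_sum_range (fun i => s i c)]
  push_cast
  exact sum_congr rfl fun i _ => Int.toNat_of_nonneg (h.spoke_nonneg i.isLt c.isLt)

theorem isLocalAntimagic (h : IsLabelArray K k e s)
    (hrow : ∀ i, i + 1 < K → rowWeight k e s i ≠ rowWeight k e s (i + 1))
    (hcol : ∀ i c, i < K → c < k → rowWeight k e s i ≠ colWeight K s c) :
    IsLocalAntimagic (pathJoinNull K k) (arrayLabeling K k e s) := by
  refine ⟨bijOn_Icc_ncard_of_injOn h.injOn h.mapsTo, ?_⟩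
  rintro (i | c) (j | d) hadj <;> rw [← (Nat.cast_injective (R := ℤ)).ne_iff] <;>
    simp only [h.vertexWeight_inl, h.vertexWeight_inr]
  · rcases pathGraph_adj.1 (joinG_adj_inl_inl.1 hadj) with hij | hji
    · exact hij ▸ hrow i (hij ▸ j.isLt)
    · exact hji ▸ (hrow j (hji ▸ i.isLt)).symm
  · exact hcol i d i.isLt d.isLt
  · exact (hcol j c j.isLt c.isLt).symm
  · exact (joinG_adj_inr_inr.1 hadj).elim

theorem colorCount_le (h : IsLabelArray K k e s) {t : Finset ℤ}
    (hrow : ∀ i < K, rowWeight k e s i ∈ t) (hcol : ∀ c < k, colWeight K s c ∈ t) :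
    colorCount (pathJoinNull K k) (arrayLabeling K k e s) ≤ t.card := by
  refine (colorCount_le_card (t := t.image Int.toNat) ?_).trans card_image_le
  rintro (i | c) <;> refine mem_image.2 ⟨_, ?_, Int.toNat_natCast _⟩
  · exact h.vertexWeight_inl i ▸ hrow i i.isLt
  · exact h.vertexWeight_inr c ▸ hcol c c.isLt

theorem chiLA_eq_three (h : IsLabelArray K k e s) (hK : 2 ≤ K) (hk : 1 ≤ k) {a b C : ℤ}
    (hrow : ∀ i < K, rowWeight k e s i = if i % 2 = 0 then a else b)
    (hcol : ∀ c < k, colWeight K s c = C) (hab : a ≠ b) (haC : a ≠ C) (hbC : b ≠ C) :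
    chiLA (pathJoinNull K k) = 3 := by
  refine chiLA_eq_of_colorCount_le (h.isLocalAntimagic ?_ ?_)
    ((h.colorCount_le (t := {a, b, C}) ?_ ?_).trans card_le_three) fun g hg =>
      hg.card_le_colorCount <| isNClique_joinG (a := ⟨0, by omega⟩) (b := ⟨1, hK⟩)
        (pathGraph_adj.2 (.inl rfl)) ⟨0, hk⟩
  · intro i hi
    rw [hrow i (by omega), hrow (i + 1) hi]
    grind
  · intro i c hi hc
    rw [hrow i hi, hcol c hc]
    grind
  · intro i hi
    rw [hrow i hi]
    grind
  · intro c hc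
    simp [hcol c hc]

end IsLabelArray

end LabelArray

/-- The cyclic successor of `j` among the residues `0, …, m - 1`. -/
def cyclicSucc (m j : ℕ) : ℕ := if j + 1 = m then 0 else j + 1

theorem sum_range_cyclicSucc {M : Type*} [AddCommMonoid M] (g : ℕ → M) (m : ℕ) :
    ∑ j ∈ range m, g (cyclicSucc m j) = ∑ j ∈ range m, g j := by
  cases m with
  | zero => rfl
  | succ m =>
    rw [sum_range_succ, sum_range_succ']
    congr 1
    · refine sum_congr rfl fun j hj => ?_
      rw [cyclicSucc, if_neg]
      grind
    · simp [cyclicSucc]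

theorem sum_range_two_mul {M : Type*} [AddCommMonoid M] (g : ℕ → M) (m : ℕ) :
    ∑ i ∈ range (2 * m), g i = ∑ j ∈ range m, (g (2 * j) + g (2 * j + 1)) := by
  induction m with
  | zero => rfl
  | succ m ih => rw [Nat.mul_succ, sum_range_succ, sum_range_succ, ih, sum_range_succ, add_assoc]

/-- Labels of the path `P_{2m}`: the edges at even positions get the labels `1, …, m - 1` in order,
and the `j`-th edge at an odd position gets the label `y j`. -/
def interleave (m : ℕ) (y : ℕ → ℤ) (i : ℕ) : ℤ :=
  if i % 2 = 1 then y (i / 2) else if i = 2 * m then 0 else i / 2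

section Fan

/-- The label of the spoke at the `2j`-th vertex of the path that gives this vertex the weight `a`
when the edges of the path are labeled by `interleave m y`. -/
def evenSpoke (y : ℕ → ℤ) (a : ℤ) (j : ℕ) : ℤ :=
  a - j - y j

/-- The label of the spoke at the `2j + 1`-st vertex of the path that gives this vertex the weight
`b` when the edges of the path are labeled by `interleave m y`. -/
def oddSpoke (m : ℕ) (y : ℕ → ℤ) (b : ℤ) (j : ℕ) : ℤ :=
  b - cyclicSucc m j - y j

/-- The labels of the spokes of a fan that give the weights `a` and `b` alternately to the vertices
of the path. They form an array with a single column. -/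
def fanSpoke (m : ℕ) (y : ℕ → ℤ) (a b : ℤ) (i _ : ℕ) : ℤ :=
  if i % 2 = 0 then evenSpoke y a (i / 2) else oddSpoke m y b (i / 2)

/-- The labels of the edges of the path `P_{2m}` at odd positions and those of the spokes are
different numbers between `m` and `4m - 1`, as is required for a labeling of the fan. -/
structure IsFanLabeling (m : ℕ) (y : ℕ → ℤ) (a b : ℤ) : Prop where
  path_mem : ∀ j < m, m ≤ y j ∧ y j < 4 * m
  even_mem : ∀ j < m, m ≤ evenSpoke y a j ∧ evenSpoke y a j < 4 * m
  odd_mem : ∀ j < m, m ≤ oddSpoke m y b j ∧ oddSpoke m y b j < 4 * m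
  path_inj : ∀ j < m, ∀ l < m, y j = y l → j = l
  even_inj : ∀ j < m, ∀ l < m, evenSpoke y a j = evenSpoke y a l → j = l
  odd_inj : ∀ j < m, ∀ l < m, oddSpoke m y b j = oddSpoke m y b l → j = l
  path_ne_even : ∀ j < m, ∀ l < m, y j ≠ evenSpoke y a l
  path_ne_odd : ∀ j < m, ∀ l < m, y j ≠ oddSpoke m y b l
  even_ne_odd : ∀ j < m, ∀ l < m, evenSpoke y a j ≠ oddSpoke m y b l

variable {m : ℕ} {y : ℕ → ℤ} {a b : ℤ}

theorem rowWeight_fanSpoke {i : ℕ} (hi : i < 2 * m) :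
    rowWeight 1 (interleave m y) (fanSpoke m y a b) i = if i % 2 = 0 then a else b := by
  simp only [rowWeight, sum_range_one, fanSpoke, interleave, evenSpoke, oddSpoke, cyclicSucc]
  grind

namespace IsFanLabeling

theorem isLabelArray (h : IsFanLabeling m y a b) :
    IsLabelArray (2 * m) 1 (interleave m y) (fanSpoke m y a b) := by
  obtain ⟨hp, he, ho, hpp, hee, hoo, hpe, hpo, heo⟩ := h
  constructor <;> simp only [interleave, fanSpoke]
  · grind
  · grind
  · intro i h0 hi
    have := hp (i / 2) (by omega)
    grind
  · intro i c hi
    have := he (i / 2) (by omega)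
    have := ho (i / 2) (by omega)
    grind
  · intro i j _ hi _ hj
    have := hp (i / 2) (by omega)
    have := hp (j / 2) (by omega)
    have := hpp (i / 2) (by omega) (j / 2) (by omega)
    grind
  · intro i c j d hi hc hj hd
    have := hee (i / 2) (by omega) (j / 2) (by omega)
    have := hoo (i / 2) (by omega) (j / 2) (by omega)
    have := heo (i / 2) (by omega) (j / 2) (by omega)
    have := heo (j / 2) (by omega) (i / 2) (by omega)
    grind
  · intro i j c _ hi hj _
    have := hpe (i / 2) (by omega) (j / 2) (by omega)
    have := hpo (i / 2) (by omega) (j / 2) (by omega)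
    have := he (j / 2) (by omega)
    have := ho (j / 2) (by omega)
    grind

theorem le_fanSpoke (h : IsFanLabeling m y a b) {i : ℕ} (hi : i < 2 * m) :
    m ≤ fanSpoke m y a b i 0 := by
  have := h.even_mem (i / 2) (by omega)
  have := h.odd_mem (i / 2) (by omega)
  grind [fanSpoke]

theorem chiLA_eq_three (h : IsFanLabeling m y a b) (hm : 3 ≤ m) (hab : a ≠ b) (ha : a < 6 * m)
    (hb : b < 6 * m) : chiLA (pathJoinNull (2 * m) 1) = 3 := by
  have hcol : 6 * (m : ℤ) ≤ colWeight (2 * m) (fanSpoke m y a b) 0 := by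
    have hsum := card_nsmul_le_sum (range (2 * m)) (fanSpoke m y a b · 0) m fun i hi =>
      h.le_fanSpoke (mem_range.1 hi)
    rw [card_range, nsmul_eq_mul] at hsum
    push_cast at hsum
    rw [colWeight]
    nlinarith
  refine h.isLabelArray.chiLA_eq_three (by omega) le_rfl (fun i hi => rowWeight_fanSpoke hi)
    (C := colWeight (2 * m) (fanSpoke m y a b) 0) ?_ hab (by omega) (by omega)
  intro c hc
  rw [Nat.lt_one_iff.1 hc]

/-- The sums `j + y j` run through an interval of length `m`, so that each kind of spokes gets the
labels of an interval, the last odd spoke moving from its lower to beyond its upper end. -/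
theorem two_mul_add_one (r : ℕ) : IsFanLabeling (2 * r + 1)
    (fun j => if j < r then 3 * r + 2 + j else r + 1 + j) (9 * r + 3) (11 * r + 4) := by
  constructor <;> grind [evenSpoke, oddSpoke, cyclicSucc]

/-- Here the sums `j + y j` run through two intervals of lengths `m / 2 ∓ 1`, and the intervals of
the labels of even and of odd spokes alternate. -/
theorem four_mul (r : ℕ) : IsFanLabeling (4 * r)
    (fun j => if j < r then 5 * r - 1 + j else if j + 1 < 2 * r then 3 * r + j
      else if j + 1 < 3 * r then 5 * r + 1 + j else 3 * r + j)
    (19 * r - 2) (21 * r - 1) := by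
  constructor <;> grind [evenSpoke, oddSpoke, cyclicSucc]

/-- The labels of the path would be `1, …, 2m - 1` again, but the edge due to get `6r + 3` gets
`10r + 5` instead, which leaves `6r + 3` to a spoke. -/
theorem four_mul_add_two {r : ℕ} (hr : 1 ≤ r) : IsFanLabeling (4 * r + 2)
    (fun j => if j < r + 1 then 5 * r + 2 + j else if j < 2 * r + 1 then 3 * r + 1 + j
      else if j < 3 * r then 5 * r + 4 + j else if j = 3 * r then 10 * r + 5 else 3 * r + 3 + j)
    (21 * r + 9) (19 * r + 9) := by
  constructor <;> grind (splits := 12) [evenSpoke, oddSpoke, cyclicSucc]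

end IsFanLabeling

theorem chiLA_path_two_join_null_one : chiLA (pathJoinNull 2 1) = 3 := by
  refine (IsFanLabeling.two_mul_add_one 0).isLabelArray.chiLA_eq_three le_rfl le_rfl
    (fun i hi => rowWeight_fanSpoke hi) (C := 5) ?_ (by decide) (by decide) (by decide)
  intro c _
  simp [colWeight, sum_range_succ, fanSpoke, evenSpoke, oddSpoke, cyclicSucc]

theorem chiLA_path_join_null_one {m : ℕ} (hm : 1 ≤ m) (hm' : m ≠ 2) :
    chiLA (pathJoinNull (2 * m) 1) = 3 := by
  obtain ⟨r, rfl | rfl | rfl⟩ : ∃ r, m = 2 * r + 1 ∨ m = 4 * r ∨ m = 4 * r + 2 := by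
    obtain ⟨r, rfl | rfl⟩ := m.even_or_odd'
    · obtain ⟨s, rfl | rfl⟩ := r.even_or_odd' <;> exact ⟨s, by omega⟩
    · exact ⟨r, .inl rfl⟩
  · obtain rfl | hr := Nat.eq_zero_or_pos r
    · exact chiLA_path_two_join_null_one
    · exact (IsFanLabeling.two_mul_add_one r).chiLA_eq_three (by omega) (by omega) (by omega)
        (by omega)
  · exact (IsFanLabeling.four_mul r).chiLA_eq_three (by omega) (by omega) (by omega) (by omega)
  · exact (IsFanLabeling.four_mul_add_two (r := r) (by omega)).chiLA_eq_three (by omega) (by omega)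
      (by omega) (by omega)

end Fan

section Blocks

/-- The label of the spoke from the `2j`-th vertex of `P_{2m}` to the `c`-th vertex of `O_k`. The
spokes get the labels `H - mk, …, H + mk - 1`, where `H = m (k + 2)`. From column `3`
on, columns alternate above and below `H`, which makes the sum of two of them independent of `j`. -/
def blockEntry (m : ℕ) (H : ℤ) (j c : ℕ) : ℤ :=
  if c = 0 then H + m - 1 - 2 * j
  else if c = 2 then H - 3 * m + j
  else if c % 2 = 1 then H + m * c + j
  else H - 1 - m * c - j

/-- The `j'` such that, in the `c`-th column, the labels of the spokes at the `2j + 1`-st and at the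
`2j'`-th vertex of the path are symmetric about `H - 1/2`. The shift in column `2` makes up for the
labels of the path, which contribute less at its last vertex than at the other odd ones. -/
def mirrorRow (m c j : ℕ) : ℕ := if c = 2 then cyclicSucc m j else j

/-- The labels of the spokes of `P_{2m} ∨ O_k`: `blockEntry` gives those at the even vertices of the
path, and those at the odd vertices are their mirror images about `H - 1/2`. -/
def blockSpoke (m : ℕ) (H : ℤ) (i c : ℕ) : ℤ :=
  if i % 2 = 0 then blockEntry m H (i / 2) c
  else 2 * H - 1 - blockEntry m H (mirrorRow m c (i / 2)) c

variable {m : ℕ} {H : ℤ}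

theorem mirrorRow_lt {c j : ℕ} (hj : j < m) : mirrorRow m c j < m := by
  grind [mirrorRow, cyclicSucc]

theorem mirrorRow_injective (c : ℕ) : Function.Injective (mirrorRow m c) := by
  grind [Function.Injective, mirrorRow, cyclicSucc]

theorem colWeight_blockSpoke (c : ℕ) :
    colWeight (2 * m) (blockSpoke m H) c = m * (2 * H - 1) := by
  have hmirror : ∑ j ∈ range m, blockEntry m H (mirrorRow m c j) c =
      ∑ j ∈ range m, blockEntry m H j c := by
    unfold mirrorRow
    split_ifs
    · exact sum_range_cyclicSucc (blockEntry m H · c) m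
    · rfl
  have hrow (j : ℕ) : blockSpoke m H (2 * j) c + blockSpoke m H (2 * j + 1) c =
      blockEntry m H j c + (2 * H - 1 - blockEntry m H (mirrorRow m c j) c) := by
    grind [blockSpoke]
  rw [colWeight, sum_range_two_mul, sum_congr rfl fun j _ => hrow j, sum_add_distrib,
    sum_sub_distrib, hmirror, sum_const, card_range, nsmul_eq_mul]
  ring

theorem sum_blockEntry (N j : ℕ) : ∑ c ∈ range (2 * N + 3), blockEntry m H j c =
    (2 * N + 3) * H - (N + 1) * (m + 1) := by
  induction N with
  | zero =>
    have hzero : blockEntry m H j 0 = H + m - 1 - 2 * j := by grind [blockEntry]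
    have hone : blockEntry m H j 1 = H + m + j := by grind [blockEntry]
    have htwo : blockEntry m H j 2 = H - 3 * m + j := by grind [blockEntry]
    rw [sum_range_succ, sum_range_succ, sum_range_one, hzero, hone, htwo]
    push_cast
    ring
  | succ N ih =>
    have hodd : blockEntry m H j (2 * N + 3) = H + m * (2 * N + 3) + j := by
      grind [blockEntry]
    have heven : blockEntry m H j (2 * N + 4) = H - 1 - m * (2 * N + 4) - j := by
      grind [blockEntry]
    rw [show 2 * (N + 1) + 3 = 2 * N + 3 + 1 + 1 by ring, sum_range_succ, sum_range_succ, ih, hodd,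
      heven]
    push_cast
    ring

theorem sum_blockEntry_mirrorRow (N j : ℕ) :
    ∑ c ∈ range (2 * N + 3), blockEntry m H (mirrorRow m c j) c =
      (2 * N + 3) * H - (N + 1) * (m + 1) + cyclicSucc m j - j := by
  have hcol (c : ℕ) : blockEntry m H (mirrorRow m c j) c =
      blockEntry m H j c + if c = 2 then (cyclicSucc m j - j : ℤ) else 0 := by
    grind [blockEntry, mirrorRow]
  rw [sum_congr rfl fun c _ => hcol c, sum_add_distrib, sum_blockEntry, sum_ite_eq',
    if_pos (by simp)]
  ring

theorem rowWeight_blockSpoke (N : ℕ) {i : ℕ} (hi : i < 2 * m) :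
    rowWeight (2 * N + 3) (interleave m fun j => 2 * m - 1 - j) (blockSpoke m H) i =
      if i % 2 = 0 then 2 * m - 1 + (2 * N + 3) * H - (N + 1) * (m + 1)
      else 2 * m - 1 + (2 * N + 3) * (H - 1) + (N + 1) * (m + 1) := by
  unfold rowWeight blockSpoke
  split_ifs
  · rw [sum_blockEntry]
    grind [interleave]
  · rw [sum_sub_distrib, sum_blockEntry_mirrorRow, sum_const, card_range, nsmul_eq_mul]
    push_cast
    grind [interleave, cyclicSucc]

/-- The number `x` is in the `c`-th of the blocks of `2m` numbers symmetric about `H - 1/2`. -/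
def InBlock (m : ℕ) (H : ℤ) (c : ℕ) (x : ℤ) : Prop :=
  m * c ≤ max (x - H) (H - 1 - x) ∧ max (x - H) (H - 1 - x) < m * (c + 1)

theorem InBlock.column_eq {c d : ℕ} {x : ℤ} (hc : InBlock m H c x) (hd : InBlock m H d x) :
    c = d := by
  have hcd : (c : ℤ) < d + 1 := lt_of_mul_lt_mul_left (hc.1.trans_lt hd.2) (Nat.cast_nonneg m)
  have hdc : (d : ℤ) < c + 1 := lt_of_mul_lt_mul_left (hd.1.trans_lt hc.2) (Nat.cast_nonneg m)
  omega

theorem InBlock.mem_of_lt {c k : ℕ} {x : ℤ} (h : InBlock m H c x) (hc : c < k) :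
    H - m * k ≤ x ∧ x < H + m * k := by
  have : (m * (c + 1) : ℤ) ≤ m * k := by gcongr; exact_mod_cast hc
  grind [InBlock]

theorem inBlock_mirror {c : ℕ} {x : ℤ} (h : InBlock m H c x) : InBlock m H c (2 * H - 1 - x) := by
  grind [InBlock]

theorem inBlock_blockEntry {j c : ℕ} (hj : j < m) : InBlock m H c (blockEntry m H j c) := by
  have : (0 : ℤ) ≤ m * c := by positivity
  grind [InBlock, blockEntry]

theorem inBlock_blockSpoke {i c : ℕ} (hi : i < 2 * m) : InBlock m H c (blockSpoke m H i c) := by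
  unfold blockSpoke
  split_ifs
  · exact inBlock_blockEntry (by omega)
  · exact inBlock_mirror (inBlock_blockEntry (mirrorRow_lt (by omega)))

theorem blockEntry_inj {j l c : ℕ} (h : blockEntry m H j c = blockEntry m H l c) : j = l := by
  grind [blockEntry]

theorem blockEntry_ne_mirror {j l c : ℕ} (hj : j < m) (hl : l < m) :
    blockEntry m H j c ≠ 2 * H - 1 - blockEntry m H l c := by
  have : (0 : ℤ) ≤ m * c := by positivity
  grind [blockEntry]

theorem blockSpoke_inj {i j c : ℕ} (hi : i < 2 * m) (hj : j < 2 * m)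
    (h : blockSpoke m H i c = blockSpoke m H j c) : i = j := by
  unfold blockSpoke at h
  split_ifs at h
  · have := blockEntry_inj h
    omega
  · exact (blockEntry_ne_mirror (by omega) (mirrorRow_lt (by omega)) h).elim
  · exact (blockEntry_ne_mirror (by omega) (mirrorRow_lt (by omega)) h.symm).elim
  · have := mirrorRow_injective c (blockEntry_inj (sub_right_inj.1 h))
    omega

theorem isLabelArray_blockSpoke (m k : ℕ) :
    IsLabelArray (2 * m) k (interleave m fun j => 2 * m - 1 - j)
      (blockSpoke m (m * (k + 2))) := by
  have hpath {i : ℕ} (h0 : 0 < i) (hi : i < 2 * m) :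
      1 ≤ interleave m (fun j => 2 * m - 1 - j) i ∧
        interleave m (fun j => 2 * m - 1 - j) i < 2 * m := by
    grind [interleave]
  have hspoke {i c : ℕ} (hi : i < 2 * m) (hc : c < k) :=
    (inBlock_blockSpoke (H := m * (k + 2)) (c := c) hi).mem_of_lt hc
  have : (0 : ℤ) ≤ m * k := by positivity
  constructor
  · grind [interleave]
  · grind [interleave]
  · intro i h0 hi
    have := hpath h0 hi
    grind
  · intro i c hi hc
    have := hspoke hi hc
    grind
  · grind [interleave]
  · intro i c j d hi _ hj _ h
    obtain rfl := (h ▸ inBlock_blockSpoke hi).column_eq (inBlock_blockSpoke hj)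
    exact ⟨blockSpoke_inj hi hj h, rfl⟩
  · intro i j c h0 hi hj hc
    have := hpath h0 hi
    have := hspoke hj hc
    grind

theorem mul_lt_or_lt_mul (N : ℕ) (hm : 1 ≤ m) (hH : H = m * (2 * N + 5)) :
    m * (2 * H - 1) < 2 * m - 1 + (2 * N + 3) * H - (N + 1) * (m + 1) ∨
      2 * m - 1 + (2 * N + 3) * (H - 1) + (N + 1) * (m + 1) < m * (2 * H - 1) := by
  -- Rows have `2N + 3` spokes and columns `2m`, with labels about `H` on average; as `2N + 3` is
  -- odd, the two numbers differ by at least one.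
  have hNm : (N : ℤ) ≤ m * N := le_mul_of_one_le_left (by positivity) (by exact_mod_cast hm)
  have hpos : 0 ≤ H := by rw [hH]; positivity
  rcases le_or_gt m (N + 1) with hle | hgt
  · have : H * 1 ≤ H * (2 * N + 3 - 2 * m) := mul_le_mul_of_nonneg_left (by omega) hpos
    left
    linarith
  · have : H * 1 ≤ H * (2 * m - (2 * N + 3)) := mul_le_mul_of_nonneg_left (by omega) hpos
    right
    linarith

theorem chiLA_path_join_null_two_mul_add_three (N : ℕ) (hm : 1 ≤ m) :
    chiLA (pathJoinNull (2 * m) (2 * N + 3)) = 3 := by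
  have : (1 : ℤ) ≤ m := by exact_mod_cast hm
  obtain ⟨H, hH⟩ : ∃ H : ℤ, H = m * ((2 * N + 3 : ℕ) + 2) := ⟨_, rfl⟩
  have hrow : 2 * m - 1 + (2 * N + 3) * H - (N + 1) * (m + 1) <
      2 * m - 1 + (2 * N + 3) * (H - 1) + (N + 1) * (m + 1) := by
    nlinarith
  have hcol := mul_lt_or_lt_mul (H := H) N hm (by rw [hH]; push_cast; ring)
  refine (hH ▸ isLabelArray_blockSpoke m (2 * N + 3)).chiLA_eq_three (by omega) (by omega)
    (fun i hi => rowWeight_blockSpoke N hi) (fun c _ => colWeight_blockSpoke c) hrow.ne ?_ ?_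
  · rcases hcol with hlt | hlt
    · exact hlt.ne'
    · exact (hrow.trans hlt).ne
  · rcases hcol with hlt | hlt
    · exact (hlt.trans hrow).ne'
    · exact hlt.ne

end Blocks

section PathFour

theorem isLabelArray_path_four : IsLabelArray 4 1 ([0, 1, 2, 3].getD · 0)
    (fun i _ => [6, 5, 7, 4].getD i 0) := by
  constructor
  · rfl
  · rfl
  · intro i h0 hi
    interval_cases i <;> decide
  · intro i c hi _
    interval_cases i <;> decide
  · intro i j h0 hi h0' hj
    interval_cases i <;> interval_cases j <;> decide
  · intro i c j d hi hc hj hd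
    interval_cases i <;> interval_cases j <;> interval_cases c <;> interval_cases d <;> decide
  · intro i j c h0 hi hj _
    interval_cases i <;> interval_cases j <;> decide

theorem exists_isLocalAntimagic_path_four : ∃ f,
    IsLocalAntimagic (pathJoinNull 4 1) f ∧ colorCount (pathJoinNull 4 1) f ≤ 4 := by
  refine ⟨_, isLabelArray_path_four.isLocalAntimagic ?_ ?_,
    (isLabelArray_path_four.colorCount_le (t := {7, 8, 12, 22}) ?_ ?_).trans card_le_four⟩
  · intro i hi
    have : i < 3 := by omega
    interval_cases i <;> decide
  · intro i c hi hc
    interval_cases i <;> interval_cases c <;> decide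
  · intro i hi
    interval_cases i <;> decide
  · intro c hc
    interval_cases c
    decide

theorem path_four_weights_eq {e₁ e₂ e₃ s₀ s₁ s₂ s₃ : ℕ}
    (hmem : ∀ x ∈ [e₁, e₂, e₃, s₀, s₁, s₂, s₃], x ∈ Icc 1 7)
    (hnodup : [e₁, e₂, e₃, s₀, s₁, s₂, s₃].Nodup)
    (h₀₂ : e₁ + s₀ = e₂ + e₃ + s₂) (h₁₃ : e₁ + e₂ + s₁ = e₃ + s₃) : e₁ + s₀ = e₃ + s₃ := by
  have hcheck : ∀ e₁ ∈ Icc 1 7, ∀ e₂ ∈ Icc 1 7, ∀ e₃ ∈ Icc 1 7, ∀ s₂ ∈ Icc 1 7,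
      e₂ + e₃ + s₂ - e₁ ∈ Icc 1 7 → [e₁, e₂, e₃, e₂ + e₃ + s₂ - e₁, s₂].Nodup →
      ∀ s₁ ∈ Icc 1 7, e₁ + e₂ + s₁ - e₃ ∈ Icc 1 7 →
      [e₁, e₂, e₃, e₂ + e₃ + s₂ - e₁, s₁, s₂, e₁ + e₂ + s₁ - e₃].Nodup →
      e₂ + e₃ + s₂ = e₁ + e₂ + s₁ := by
    decide +kernel
  obtain rfl : s₀ = e₂ + e₃ + s₂ - e₁ := by omega
  obtain rfl : s₃ = e₁ + e₂ + s₁ - e₃ := by omega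
  simp only [List.forall_mem_cons] at hmem
  obtain ⟨he₁, he₂, he₃, hs₀, hs₁, hs₂, hs₃, -⟩ := hmem
  rw [h₀₂, ← h₁₃]
  exact hcheck _ he₁ _ he₂ _ he₃ _ hs₂ hs₀ (hnodup.sublist (by simp)) _ hs₁ hs₃ hnodup

variable {f : Sym2 (Fin 4 ⊕ Fin 1) → ℕ}

/-- The edges of the fan `P_4 ∨ O_1`, those of the path first. -/
def fanFourEdges : List (Sym2 (Fin 4 ⊕ Fin 1)) :=
  [s(.inl 0, .inl 1), s(.inl 1, .inl 2), s(.inl 2, .inl 3),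
    spoke (0, 0), spoke (1, 0), spoke (2, 0), spoke (3, 0)]

theorem mem_edgeSet_of_mem_fanFourEdges {z : Sym2 (Fin 4 ⊕ Fin 1)} (hz : z ∈ fanFourEdges) :
    z ∈ (pathJoinNull 4 1).edgeSet := by
  revert z
  simp [fanFourEdges, spoke, pathGraph_adj]

theorem IsLocalAntimagic.nodup_map_fanFourEdges
    (hf : IsLocalAntimagic (pathJoinNull 4 1) f) : (fanFourEdges.map f).Nodup :=
  List.Nodup.map_on
    (fun _ hx _ hy h => hf.1.injOn (mem_edgeSet_of_mem_fanFourEdges hx)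
      (mem_edgeSet_of_mem_fanFourEdges hy) h) (by simp [fanFourEdges, spoke])

theorem IsLocalAntimagic.mem_Icc_of_mem_map_fanFourEdges
    (hf : IsLocalAntimagic (pathJoinNull 4 1) f) {n : ℕ} (hn : n ∈ fanFourEdges.map f) :
    n ∈ Icc 1 7 := by
  obtain ⟨z, hz, rfl⟩ := List.mem_map.1 hn
  have hfz := hf.1.mapsTo (mem_edgeSet_of_mem_fanFourEdges hz)
  rw [ncard_edgeSet_joinG_bot, ncard_edgeSet_pathGraph] at hfz
  exact mem_Icc.2 hfz

theorem vertexWeight_path_four (i : Fin 4) :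
    vertexWeight (pathJoinNull 4 1) f (.inl i) =
      ![f s(.inl 0, .inl 1) + f (spoke (0, 0)),
        f s(.inl 0, .inl 1) + f s(.inl 1, .inl 2) + f (spoke (1, 0)),
        f s(.inl 1, .inl 2) + f s(.inl 2, .inl 3) + f (spoke (2, 0)),
        f s(.inl 2, .inl 3) + f (spoke (3, 0))] i := by
  rw [vertexWeight_joinG_inl, vertexWeight_eq_sum_ite]
  have hswap (x y : Fin 4) : f s(.inl y, .inl x) = f s(.inl x, .inl y) := by rw [Sym2.eq_swap]
  fin_cases i <;> simp [Fin.sum_univ_four, pathGraph_adj, hswap 0 1, hswap 1 2, hswap 2 3]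

theorem IsLocalAntimagic.weight_zero_ne_two_or_one_ne_three
    (hf : IsLocalAntimagic (pathJoinNull 4 1) f) :
    vertexWeight (pathJoinNull 4 1) f (.inl 0) ≠ vertexWeight (pathJoinNull 4 1) f (.inl 2) ∨
      vertexWeight (pathJoinNull 4 1) f (.inl 1) ≠ vertexWeight (pathJoinNull 4 1) f (.inl 3) := by
  by_contra! ⟨h₀₂, h₁₃⟩
  have hne := hf.2 (x := .inl 2) (y := .inl 3) (by simp [pathGraph_adj])
  rw [← h₀₂] at hne
  simp only [vertexWeight_path_four] at h₀₂ h₁₃ hne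
  exact hne <| path_four_weights_eq (fun _ => hf.mem_Icc_of_mem_map_fanFourEdges)
    hf.nodup_map_fanFourEdges h₀₂ h₁₃

theorem chiLA_path_four_join_null_one : chiLA (pathJoinNull 4 1) = 4 := by
  obtain ⟨f, hf, hcard⟩ := exists_isLocalAntimagic_path_four
  refine chiLA_eq_of_colorCount_le hf hcard fun g hg => ?_
  rcases hg.weight_zero_ne_two_or_one_ne_three with h₀₂ | h₁₃
  · exact hg.four_le_colorCount_joinG (b := 1) (d := 0) (by simp [pathGraph_adj])
      (by simp [pathGraph_adj]) h₀₂
  · exact hg.four_le_colorCount_joinG (b := 2) (d := 0) (by simp [pathGraph_adj])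
      (by simp [pathGraph_adj]) h₁₃

end PathFour

/-- Theorem: For all integers `m, n ≥ 1` with `(m,n) ≠ (2,1)`,
`χ_la(P_{2m} ∨ O_{2n−1}) = 3`; in the exceptional case, `χ_la(P_4 ∨ O_1) = 4`. -/
theorem chiLA_path_join_null_odd (m n : ℕ) (hm : 1 ≤ m) (hn : 1 ≤ n) :
    (¬(m = 2 ∧ n = 1) →
      chiLA (joinG (pathGraph (2 * m)) (⊥ : SimpleGraph (Fin (2 * n - 1)))) = 3) ∧
    chiLA (joinG (pathGraph 4) (⊥ : SimpleGraph (Fin 1))) = 4 := by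
  refine ⟨fun hmn => ?_, chiLA_path_four_join_null_one⟩
  obtain rfl | ⟨N, rfl⟩ : n = 1 ∨ ∃ N, n = N + 2 := by
    rcases n with _ | _ | N
    · omega
    · exact .inl rfl
    · exact .inr ⟨N, rfl⟩
  · exact chiLA_path_join_null_one hm fun h => hmn ⟨h, rfl⟩
  · exact chiLA_path_join_null_two_mul_add_three N hm
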